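/- Let n ≥ 1, let v₁, …, vₙ : ℝ³ → [0,∞) be measurable functions with D(vᵢ,vᵢ) < ∞ for each i, which are linearly independent in the sense that any real linear combination ∑ᵢ cᵢ vᵢ vanishing almost everywhere has all coefficients cᵢ = 0. Let d₁, …, dₙ > 0 and let p > 2. Define the n×n matrix N by Nᵢᵢ = (2−p)·dᵢ − p·D(vᵢ,vᵢ) on the diagonal and Nᵢⱼ = −p·D(vᵢ,vⱼ) for i ≠ j. Then det N = (−1)ⁿ det Ñ, where Ñᵢᵢ = p·D(vᵢ,vᵢ) + (p−2)·dᵢ and Ñᵢⱼ = p·D(vᵢ,vⱼ) for i ≠ j; in particular det N ≠ 0, so N is nonsingular. -/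

import Mathlib

/-!
The matrix `N` is `-Ñ`, which gives the sign `(-1)ⁿ`. Moreover `Ñ = p • G + (p - 2) • diag d`,
where `G i j = D(vᵢ, vⱼ)`, so it suffices that `G` is positive semidefinite: then `Ñ` is positive
definite and `det Ñ > 0`.

Positive semidefiniteness of the Coulomb kernel comes from writing it as a continuous superposition
of products. With `φ (t, z) x = a(t) exp (-2t‖x - z‖²)` and a suitable weight `a(t)`,
`‖x - y‖⁻¹ = ∫_{t > 0} ∫_z φ (t, z) x * φ (t, z) y dz dt` for `x ≠ y`
(`lintegral_coulombFeature_mul`): the `z`-integral is a Gaussian integral producing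
`t^{-1/2} exp (-t‖x - y‖²) / √π`, and the `t`-integral is a Gamma integral. Tonelli then gives
`D(f, g) = ∫ F_f F_g` with `F_f ω = ∫ f(x) φ ω x dx`, for nonnegative `f` and `g`. Finiteness of
`D(f, f)` says that `F_f` is square integrable, so `G` is a Gram matrix in a real `L²` space.
-/

open MeasureTheory

noncomputable abbrev coulombEnergy (f g : EuclideanSpace ℝ (Fin 3) → ℝ) : ℝ :=
  ∫ x, ∫ y, f x * g y * ‖x - y‖⁻¹

/-- The Coulomb double integral of `|f|` against `|g|` is finite. -/
def CoulombFinite (f g : EuclideanSpace ℝ (Fin 3) → ℝ) : Prop :=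
  ∫⁻ x, ∫⁻ y, ENNReal.ofReal (|f x| * |g y| * ‖x - y‖⁻¹) < ⊤

open Real Set Matrix
open scoped ENNReal

/-! ### The Coulomb kernel as a superposition of Gaussian products -/

/-- The weight `a(t)` making the Gaussian products `a(t)² exp (-2t‖x-z‖²) exp (-2t‖y-z‖²)`
integrate to `t^{-1/2} exp (-t‖x-y‖²) / √π` over `z ∈ ℝ³`; only `t > 0` is relevant. -/
noncomputable def coulombWeight (t : ℝ) : ℝ :=
  √(t ^ ((1 / 2 : ℝ) - 1) / (√π * (π / (4 * t)) ^ (3 / 2 : ℝ)))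

/-- The Gaussian feature `φ (t, z) x = a(t) exp (-2t‖x - z‖²)`. -/
noncomputable def coulombFeature (ω : ℝ × EuclideanSpace ℝ (Fin 3))
    (x : EuclideanSpace ℝ (Fin 3)) : ℝ≥0∞ :=
  ENNReal.ofReal (coulombWeight ω.1 * rexp (-(2 * ω.1 * ‖x - ω.2‖ ^ 2)))

/-- The measure `dt dz` on `(0, ∞) × ℝ³`. -/
noncomputable abbrev coulombMeasure : Measure (ℝ × EuclideanSpace ℝ (Fin 3)) :=
  (volume.restrict (Ioi (0 : ℝ))).prod volume

lemma measurable_coulombWeight : Measurable coulombWeight := by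
  unfold coulombWeight; fun_prop

lemma measurable_coulombFeature :
    Measurable fun q : (ℝ × EuclideanSpace ℝ (Fin 3)) × EuclideanSpace ℝ (Fin 3) =>
      coulombFeature q.1 q.2 := by
  have := measurable_coulombWeight
  unfold coulombFeature
  fun_prop

/-- A real integral that is positive is computed by the lower Lebesgue integral: a
non-integrable function would have integral `0`. -/
lemma lintegral_ofReal_of_integral_pos {α : Type*} [MeasurableSpace α] {μ : Measure α}
    {f : α → ℝ} {c : ℝ} (hf : 0 ≤ᵐ[μ] f) (h : ∫ a, f a ∂μ = c) (hc : 0 < c) :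
    ∫⁻ a, ENNReal.ofReal (f a) ∂μ = ENNReal.ofReal c := by
  have hi : Integrable f μ := by
    by_contra hn
    rw [integral_undef hn] at h
    exact hc.ne h
  rw [← ofReal_integral_eq_lintegral_ofReal hi hf, h]

lemma two_mul_norm_sub_sq_add (x y z : EuclideanSpace ℝ (Fin 3)) :
    2 * ‖x - z‖ ^ 2 + 2 * ‖y - z‖ ^ 2
      = ‖x - y‖ ^ 2 + 4 * ‖z - (2⁻¹ : ℝ) • (x + y)‖ ^ 2 := by
  have h := parallelogram_law_with_norm ℝ (x - z) (y - z)
  have h1 : (x - z) + (y - z) = (-2 : ℝ) • (z - (2⁻¹ : ℝ) • (x + y)) := by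
    module
  have h2 : (x - z) - (y - z) = x - y := by abel
  rw [h1, h2, norm_smul] at h
  simp only [Real.norm_eq_abs, abs_neg, abs_two] at h
  nlinarith [h]

/-- The Gaussian integral over `z`. -/
lemma lintegral_coulombFeature_mul_snd {t : ℝ} (ht : 0 < t) (x y : EuclideanSpace ℝ (Fin 3)) :
    ∫⁻ z, coulombFeature (t, z) x * coulombFeature (t, z) y
      = ENNReal.ofReal (t ^ ((1 / 2 : ℝ) - 1) * rexp (-(‖x - y‖ ^ 2 * t)) / √π) := by
  have hC : 0 < (π / (4 * t)) ^ (3 / 2 : ℝ) := by positivity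
  have hw : coulombWeight t * coulombWeight t
      = t ^ ((1 / 2 : ℝ) - 1) / (√π * (π / (4 * t)) ^ (3 / 2 : ℝ)) :=
    Real.mul_self_sqrt (by positivity)
  have hw0 : 0 ≤ coulombWeight t := Real.sqrt_nonneg _
  have hpt : ∀ z, coulombFeature (t, z) x * coulombFeature (t, z) y
      = ENNReal.ofReal (coulombWeight t * coulombWeight t * rexp (-(‖x - y‖ ^ 2 * t)) *
          rexp (-(4 * t) * ‖z - (2⁻¹ : ℝ) • (x + y)‖ ^ 2)) := by
    intro z
    unfold coulombFeature
    rw [← ENNReal.ofReal_mul (by positivity)]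
    congr 1
    have h := two_mul_norm_sub_sq_add x y z
    have : rexp (-(2 * t * ‖x - z‖ ^ 2)) * rexp (-(2 * t * ‖y - z‖ ^ 2))
        = rexp (-(‖x - y‖ ^ 2 * t)) * rexp (-(4 * t) * ‖z - (2⁻¹ : ℝ) • (x + y)‖ ^ 2) := by
      rw [← Real.exp_add, ← Real.exp_add]
      congr 1
      linear_combination (-t) * h
    linear_combination (coulombWeight t * coulombWeight t) * this
  simp_rw [hpt]
  apply lintegral_ofReal_of_integral_pos
  · filter_upwards with z
    simp only [Pi.zero_apply]
    positivity
  · rw [integral_const_mul,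
      integral_sub_right_eq_self (fun z : EuclideanSpace ℝ (Fin 3) => rexp (-(4 * t) * ‖z‖ ^ 2)),
      GaussianFourier.integral_rexp_neg_mul_sq_norm (by positivity), hw]
    simp only [finrank_euclideanSpace, Fintype.card_fin, Nat.cast_ofNat]
    field_simp
  · positivity

/-- The Coulomb kernel as a superposition of Gaussian products. -/
lemma lintegral_coulombFeature_mul {x y : EuclideanSpace ℝ (Fin 3)} (hxy : x ≠ y) :
    ∫⁻ ω, coulombFeature ω x * coulombFeature ω y ∂coulombMeasure
      = ENNReal.ofReal ‖x - y‖⁻¹ := by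
  have hr : 0 < ‖x - y‖ := norm_pos_iff.2 (sub_ne_zero.2 hxy)
  have hm : ∀ x, Measurable fun ω => coulombFeature ω x := fun x =>
    measurable_coulombFeature.comp (measurable_id.prodMk measurable_const)
  rw [lintegral_prod _ ((hm x).fun_mul (hm y)).aemeasurable,
    setLIntegral_congr_fun measurableSet_Ioi
      (fun t ht => lintegral_coulombFeature_mul_snd ht x y)]
  apply lintegral_ofReal_of_integral_pos
  · filter_upwards [ae_restrict_mem measurableSet_Ioi] with t ht
    have : 0 < t := ht
    simp only [Pi.zero_apply]
    positivity
  · rw [integral_div, Real.integral_rpow_mul_exp_neg_mul_Ioi (by norm_num) (by positivity),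
      Real.Gamma_one_half_eq, ← Real.sqrt_eq_rpow, one_div, Real.sqrt_inv,
      Real.sqrt_sq hr.le]
    field_simp
  · positivity

/-! ### The Coulomb energy as an `L²` inner product -/

/-- The transform `F_f ω = ∫ f(x) φ ω x dx`, for nonnegative `f`. -/
noncomputable def coulombTransform (f : EuclideanSpace ℝ (Fin 3) → ℝ)
    (ω : ℝ × EuclideanSpace ℝ (Fin 3)) : ℝ≥0∞ :=
  ∫⁻ x, ENNReal.ofReal (f x) * coulombFeature ω x

lemma measurable_coulombTransform {f : EuclideanSpace ℝ (Fin 3) → ℝ} (hf : Measurable f) :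
    Measurable (coulombTransform f) := by
  have := measurable_coulombFeature
  unfold coulombTransform
  exact Measurable.lintegral_prod_right'
    (f := fun q : (ℝ × EuclideanSpace ℝ (Fin 3)) × EuclideanSpace ℝ (Fin 3) =>
      ENNReal.ofReal (f q.2) * coulombFeature q.1 q.2) (by fun_prop)

set_option maxHeartbeats 1000000 in
lemma lintegral_coulomb_eq {f g : EuclideanSpace ℝ (Fin 3) → ℝ} (hf : Measurable f)
    (hg : Measurable g) (hf0 : ∀ x, 0 ≤ f x) (hg0 : ∀ x, 0 ≤ g x) :
    ∫⁻ x, ∫⁻ y, ENNReal.ofReal (f x * g y * ‖x - y‖⁻¹)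
      = ∫⁻ ω, coulombTransform f ω * coulombTransform g ω ∂coulombMeasure := by
  have hφ := measurable_coulombFeature
  have hφx : ∀ x, Measurable fun ω => coulombFeature ω x := fun x =>
    hφ.comp (measurable_id.prodMk measurable_const)
  have hφω : ∀ ω, Measurable fun x => coulombFeature ω x := fun ω =>
    hφ.comp (measurable_const.prodMk measurable_id)
  have hφs : Measurable fun q : EuclideanSpace ℝ (Fin 3) × (ℝ × EuclideanSpace ℝ (Fin 3)) =>
      coulombFeature q.2 q.1 := hφ.comp measurable_swap
  have hG := measurable_coulombTransform hg
  have hinner : ∀ x, ∫⁻ y, ENNReal.ofReal (f x * g y * ‖x - y‖⁻¹)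
      = ∫⁻ ω, ENNReal.ofReal (f x) * coulombFeature ω x * coulombTransform g ω
          ∂coulombMeasure := by
    intro x
    -- on the null set `y = x` the kernel is `0` by convention, while the superposition is infinite
    have hae : ∀ᵐ y : EuclideanSpace ℝ (Fin 3), y ≠ x := by
      simp [ae_iff]
    calc ∫⁻ y, ENNReal.ofReal (f x * g y * ‖x - y‖⁻¹)
        = ∫⁻ y, ∫⁻ ω, ENNReal.ofReal (f x) * coulombFeature ω x *
            (ENNReal.ofReal (g y) * coulombFeature ω y) ∂coulombMeasure := by
          refine lintegral_congr_ae ?_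
          filter_upwards [hae] with y hy
          rw [ENNReal.ofReal_mul (mul_nonneg (hf0 x) (hg0 y)), ENNReal.ofReal_mul (hf0 x),
            ← lintegral_coulombFeature_mul hy.symm,
            ← lintegral_const_mul _ ((hφx x).fun_mul (hφx y))]
          refine lintegral_congr fun ω => ?_
          ring
      _ = ∫⁻ ω, (∫⁻ y, ENNReal.ofReal (f x) * coulombFeature ω x *
            (ENNReal.ofReal (g y) * coulombFeature ω y)) ∂coulombMeasure := by
          refine lintegral_lintegral_swap (Measurable.aemeasurable ?_)
          have := hφx x
          unfold Function.uncurry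
          fun_prop
      _ = _ := by
          refine lintegral_congr fun ω => ?_
          rw [lintegral_const_mul _ (by have := hφω ω; fun_prop)]
          rfl
  simp_rw [hinner]
  rw [lintegral_lintegral_swap (Measurable.aemeasurable (by unfold Function.uncurry; fun_prop))]
  refine lintegral_congr fun ω => ?_
  rw [lintegral_mul_const _ (by have := hφω ω; fun_prop)]
  rfl

lemma coulombTransform_mul_self_lt_top {f : EuclideanSpace ℝ (Fin 3) → ℝ} (hf : Measurable f)
    (hf0 : ∀ x, 0 ≤ f x) (hfin : CoulombFinite f f) :
    ∫⁻ ω, coulombTransform f ω * coulombTransform f ω ∂coulombMeasure < ⊤ := by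
  rw [← lintegral_coulomb_eq hf hf hf0 hf0]
  unfold CoulombFinite at hfin
  simpa only [abs_of_nonneg (hf0 _)] using hfin

lemma ae_coulombTransform_lt_top {f : EuclideanSpace ℝ (Fin 3) → ℝ} (hf : Measurable f)
    (hf0 : ∀ x, 0 ≤ f x) (hfin : CoulombFinite f f) :
    ∀ᵐ ω ∂coulombMeasure, coulombTransform f ω < ⊤ := by
  have hm := measurable_coulombTransform hf
  filter_upwards [ae_lt_top (hm.fun_mul hm) (coulombTransform_mul_self_lt_top hf hf0 hfin).ne] with ω hω
  by_contra h
  rw [not_lt, top_le_iff] at h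
  simp [h] at hω

lemma memLp_coulombTransform {f : EuclideanSpace ℝ (Fin 3) → ℝ} (hf : Measurable f)
    (hf0 : ∀ x, 0 ≤ f x) (hfin : CoulombFinite f f) :
    MemLp (fun ω => (coulombTransform f ω).toReal) 2 coulombMeasure := by
  have hm := measurable_coulombTransform hf
  rw [memLp_two_iff_integrable_sq hm.ennreal_toReal.aestronglyMeasurable]
  simp_rw [pow_two, ← ENNReal.toReal_mul]
  exact integrable_toReal_of_lintegral_ne_top (hm.fun_mul hm).aemeasurable
    (coulombTransform_mul_self_lt_top hf hf0 hfin).ne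

lemma coulombEnergy_eq {f g : EuclideanSpace ℝ (Fin 3) → ℝ} (hf : Measurable f)
    (hg : Measurable g) (hf0 : ∀ x, 0 ≤ f x) (hg0 : ∀ x, 0 ≤ g x)
    (hff : CoulombFinite f f) (hgg : CoulombFinite g g) :
    coulombEnergy f g
      = ∫ ω, (coulombTransform f ω).toReal * (coulombTransform g ω).toReal ∂coulombMeasure := by
  have hF := measurable_coulombTransform hf
  have hG := measurable_coulombTransform hg
  have hker : Measurable fun q : EuclideanSpace ℝ (Fin 3) × EuclideanSpace ℝ (Fin 3) =>
      f q.1 * g q.2 * ‖q.1 - q.2‖⁻¹ := by fun_prop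
  have hin : Measurable fun x => ∫⁻ y, ENNReal.ofReal (f x * g y * ‖x - y‖⁻¹) :=
    Measurable.lintegral_prod_right hker.ennreal_ofReal
  -- the mixed energy is finite by `ab ≤ a² + b²`
  have hfinite : ∫⁻ x, ∫⁻ y, ENNReal.ofReal (f x * g y * ‖x - y‖⁻¹) ≠ ⊤ := by
    rw [lintegral_coulomb_eq hf hg hf0 hg0]
    have hle : ∫⁻ ω, coulombTransform f ω * coulombTransform g ω ∂coulombMeasure
        ≤ ∫⁻ ω, (coulombTransform f ω * coulombTransform f ω
          + coulombTransform g ω * coulombTransform g ω) ∂coulombMeasure := by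
      refine lintegral_mono fun ω => ?_
      rcases le_total (coulombTransform f ω) (coulombTransform g ω) with h | h
      · exact (mul_le_mul_left h _).trans le_add_self
      · exact (mul_le_mul_right h _).trans le_self_add
    rw [lintegral_add_left (hF.fun_mul hF)] at hle
    exact (hle.trans_lt (ENNReal.add_lt_top.2 ⟨coulombTransform_mul_self_lt_top hf hf0 hff,
      coulombTransform_mul_self_lt_top hg hg0 hgg⟩)).ne
  have hinner : ∀ x, ∫ y, f x * g y * ‖x - y‖⁻¹
      = (∫⁻ y, ENNReal.ofReal (f x * g y * ‖x - y‖⁻¹)).toReal := by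
    intro x
    refine integral_eq_lintegral_of_nonneg_ae ?_ ?_
    · filter_upwards with y
      have := hf0 x
      have := hg0 y
      simp only [Pi.zero_apply]
      positivity
    · exact (hker.comp (measurable_const.prodMk measurable_id)).aestronglyMeasurable
  unfold coulombEnergy
  simp_rw [hinner, ← ENNReal.toReal_mul]
  rw [integral_toReal hin.aemeasurable (ae_lt_top hin hfinite),
    lintegral_coulomb_eq hf hg hf0 hg0, integral_toReal (hF.fun_mul hG).aemeasurable]
  filter_upwards [ae_coulombTransform_lt_top hf hf0 hff,
    ae_coulombTransform_lt_top hg hg0 hgg] with ω h1 h2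
  exact ENNReal.mul_lt_top h1 h2

lemma posSemidef_coulombEnergy {n : ℕ} (v : Fin n → EuclideanSpace ℝ (Fin 3) → ℝ)
    (hmeas : ∀ i, Measurable (v i)) (hnonneg : ∀ i, ∀ x, 0 ≤ v i x)
    (hfin : ∀ i, CoulombFinite (v i) (v i)) :
    (Matrix.of fun i j : Fin n => coulombEnergy (v i) (v j)).PosSemidef := by
  have hL := fun i => memLp_coulombTransform (hmeas i) (hnonneg i) (hfin i)
  have hgram : (Matrix.of fun i j : Fin n => coulombEnergy (v i) (v j))
      = Matrix.gram ℝ fun i => (hL i).toLp := by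
    ext i j
    rw [Matrix.of_apply, Matrix.gram_apply, L2.inner_def,
      coulombEnergy_eq (hmeas i) (hmeas j) (hnonneg i) (hnonneg j) (hfin i) (hfin j)]
    refine integral_congr_ae ?_
    filter_upwards [(hL i).coeFn_toLp, (hL j).coeFn_toLp] with ω h1 h2
    rw [h1, h2]
    simp [mul_comm]
  rw [hgram]
  exact Matrix.posSemidef_gram ℝ _

/-- The matrix `N` with `Nᵢᵢ = (2−p)·dᵢ − p·D(vᵢ,vᵢ)` and `Nᵢⱼ = −p·D(vᵢ,vⱼ)` (`i ≠ j`)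
satisfies `det N = (−1)ⁿ det Ñ`, where `Ñᵢᵢ = p·D(vᵢ,vᵢ) + (p−2)·dᵢ` and
`Ñᵢⱼ = p·D(vᵢ,vⱼ)`; in particular `det N ≠ 0`, so `N` is nonsingular. -/
theorem N_det_ne_zero {n : ℕ} (hn : 1 ≤ n)
    (v : Fin n → EuclideanSpace ℝ (Fin 3) → ℝ)
    (hmeas : ∀ i, Measurable (v i))
    (hnonneg : ∀ i, ∀ x, 0 ≤ v i x)
    (hfin : ∀ i, CoulombFinite (v i) (v i))
    (hindep : ∀ c : Fin n → ℝ,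
      (fun x => ∑ i, c i * v i x) =ᵐ[volume] 0 → ∀ i, c i = 0)
    (d : Fin n → ℝ) (hd : ∀ i, 0 < d i)
    (p : ℝ) (hp : 2 < p) :
    (Matrix.of fun i j : Fin n =>
        if i = j then (2 - p) * d i - p * coulombEnergy (v i) (v i)
        else -(p * coulombEnergy (v i) (v j))).det
      = (-1 : ℝ) ^ n *
        (Matrix.of fun i j : Fin n =>
          if i = j then p * coulombEnergy (v i) (v i) + (p - 2) * d i
          else p * coulombEnergy (v i) (v j)).det ∧
    (Matrix.of fun i j : Fin n =>
        if i = j then (2 - p) * d i - p * coulombEnergy (v i) (v i)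
        else -(p * coulombEnergy (v i) (v j))).det ≠ 0 := by
  have hN : (Matrix.of fun i j : Fin n =>
        if i = j then (2 - p) * d i - p * coulombEnergy (v i) (v i)
        else -(p * coulombEnergy (v i) (v j)))
      = -(Matrix.of fun i j : Fin n =>
          if i = j then p * coulombEnergy (v i) (v i) + (p - 2) * d i
          else p * coulombEnergy (v i) (v j)) := by
    ext i j
    simp only [Matrix.of_apply, Matrix.neg_apply]
    split_ifs
    · ring
    · rfl
  have hdecomp : (Matrix.of fun i j : Fin n =>
          if i = j then p * coulombEnergy (v i) (v i) + (p - 2) * d i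
          else p * coulombEnergy (v i) (v j))
      = p • (Matrix.of fun i j : Fin n => coulombEnergy (v i) (v j))
        + Matrix.diagonal fun i => (p - 2) * d i := by
    ext i j
    by_cases h : i = j
    · subst h
      simp
    · simp [h]
  have hpos : (Matrix.of fun i j : Fin n =>
          if i = j then p * coulombEnergy (v i) (v i) + (p - 2) * d i
          else p * coulombEnergy (v i) (v j)).PosDef := by
    rw [hdecomp]
    exact Matrix.PosDef.posSemidef_add
      ((posSemidef_coulombEnergy v hmeas hnonneg hfin).smul (by linarith))
      (Matrix.PosDef.diagonal fun i => mul_pos (by linarith) (hd i))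
  have hdet : (Matrix.of fun i j : Fin n =>
        if i = j then (2 - p) * d i - p * coulombEnergy (v i) (v i)
        else -(p * coulombEnergy (v i) (v j))).det
      = (-1 : ℝ) ^ n *
        (Matrix.of fun i j : Fin n =>
          if i = j then p * coulombEnergy (v i) (v i) + (p - 2) * d i
          else p * coulombEnergy (v i) (v j)).det := by
    rw [hN, Matrix.det_neg, Fintype.card_fin]
  refine ⟨hdet, ?_⟩
  rw [hdet]
  exact mul_ne_zero (pow_ne_zero _ (by norm_num)) hpos.det_pos.ne'
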